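/- arXiv:0902.4743 — 2 statements merged into one kernel-verified Lean document; each statement's English description precedes it below -/
import Mathlib

section
/- In a coherent category E, for every internal co-category Q, the morphisms l, r : Q0 → Q1 are jointly epimorphic; that is, every co-category in a coherent category is a co-preorder. -/
/-!
Reason with generalized elements `x` of `Q1`. If `q x = ν1 y`, then the retraction `[id, r i]` of
`ν1` gives `x = y` by the right co-unit law, so `q x = ν1 x`, and applying `[l i, id]` gives
`x = l (i x)` by the left one. Symmetrically, `q x = ν2 y` forces `x = r (i x)`. But `ν1` and `ν2`
cover the pushout `Q2`, so by stability of unions their pullbacks along `q` cover `Q1`. Two maps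
that agree on `l` and `r` agree on this cover, so their equalizer is all of `Q1`.
-/

open CategoryTheory CategoryTheory.Limits

universe v u

/-- Data of an internal co-category in a category `E`. -/
structure CocatStruct (E : Type u) [Category.{v} E] where
  Q0 : E
  Q1 : E
  Q2 : E
  l : Q0 ⟶ Q1
  r : Q0 ⟶ Q1
  i : Q1 ⟶ Q0
  ν1 : Q1 ⟶ Q2
  ν2 : Q1 ⟶ Q2
  q : Q1 ⟶ Q2

variable {E : Type u} [Category.{v} E]

/-- The axioms for an internal co-category. -/
structure CocatStruct.IsCocategory (C : CocatStruct E) : Prop where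
  po : IsPushout C.r C.l C.ν1 C.ν2
  li : C.l ≫ C.i = 𝟙 C.Q0
  ri : C.r ≫ C.i = 𝟙 C.Q0
  ql : C.l ≫ C.q = C.l ≫ C.ν1
  qr : C.r ≫ C.q = C.r ≫ C.ν2
  counit_left : ∀ u : C.Q2 ⟶ C.Q1, C.ν1 ≫ u = C.i ≫ C.l → C.ν2 ≫ u = 𝟙 C.Q1 →
    C.q ≫ u = 𝟙 C.Q1
  counit_right : ∀ u : C.Q2 ⟶ C.Q1, C.ν1 ≫ u = 𝟙 C.Q1 → C.ν2 ≫ u = C.i ≫ C.r →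
    C.q ≫ u = 𝟙 C.Q1
  coassoc : ∀ {Q3 : E} (μ1 μ2 μ3 : C.Q1 ⟶ Q3) (j12 j23 u v : C.Q2 ⟶ Q3),
    C.ν1 ≫ j12 = μ1 → C.ν2 ≫ j12 = μ2 →
    C.ν1 ≫ j23 = μ2 → C.ν2 ≫ j23 = μ3 →
    C.ν1 ≫ u = C.q ≫ j12 → C.ν2 ≫ u = μ3 →
    C.ν1 ≫ v = μ1 → C.ν2 ≫ v = C.q ≫ j23 →
    C.q ≫ u = C.q ≫ v

/-- Two parallel morphisms are jointly epimorphic. -/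
def JointlyEpi {X Y : E} (f g : X ⟶ Y) : Prop :=
  ∀ {Z : E} (u v : Y ⟶ Z), f ≫ u = f ≫ v → g ≫ u = g ≫ v → u = v

/-- A coherent category: finite limits, pullback-stable (strong-epi/mono) images, and
pullback-stable unions of subobjects. -/
class CoherentCategory (E : Type u) [Category.{v} E] extends HasFiniteLimits E : Prop where
  exists_image : ∀ {X Y : E} (f : X ⟶ Y), ∃ (I : E) (e : X ⟶ I) (m : I ⟶ Y),
    StrongEpi e ∧ Mono m ∧ e ≫ m = f
  strongEpi_pullback : ∀ {P X Y Z : E} {fst : P ⟶ X} {snd : P ⟶ Y} {f : X ⟶ Z} {g : Y ⟶ Z},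
    IsPullback fst snd f g → StrongEpi g → StrongEpi fst
  exists_union : ∀ {X : E} (a b : Subobject X), ∃ c : Subobject X,
    a ≤ c ∧ b ≤ c ∧ ∀ d : Subobject X, a ≤ d → b ≤ d → c ≤ d
  union_pullback : ∀ {X Y : E} (f : Y ⟶ X) (a b c : Subobject X),
    a ≤ c → b ≤ c → (∀ d : Subobject X, a ≤ d → b ≤ d → c ≤ d) →
    ∀ d : Subobject Y, (Subobject.pullback f).obj a ≤ d → (Subobject.pullback f).obj b ≤ d →
      (Subobject.pullback f).obj c ≤ d

lemma codisjoint_mk_of_isPushout {W X Y P : E} {f : W ⟶ X} {g : W ⟶ Y} {a : X ⟶ P} {b : Y ⟶ P}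
    [Mono a] [Mono b] (po : IsPushout f g a b) :
    Codisjoint (Subobject.mk a) (Subobject.mk b) := by
  intro d had hbd
  have ha : d.Factors a := Subobject.factors_of_le a had (Subobject.mk_factors_self a)
  have hb : d.Factors b := Subobject.factors_of_le b hbd (Subobject.mk_factors_self b)
  have hw : f ≫ d.factorThru a ha = g ≫ d.factorThru b hb := by
    simpa [← cancel_mono d.arrow] using po.w
  have hs : po.desc _ _ hw ≫ d.arrow = 𝟙 P := by
    apply po.hom_ext <;> simp
  exact Subobject.le_of_comm (Subobject.arrow ⊤ ≫ po.desc _ _ hw) (by simp [hs])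

lemma CoherentCategory.codisjoint_pullback [CoherentCategory E] {X Y : E} (f : Y ⟶ X)
    {a b : Subobject X} (hab : Codisjoint a b) :
    Codisjoint ((Subobject.pullback f).obj a) ((Subobject.pullback f).obj b) := by
  intro d had hbd
  rw [← Subobject.pullback_top f]
  exact union_pullback f a b ⊤ le_top le_top (fun _ ha hb ↦ hab ha hb) d had hbd

lemma eq_of_codisjoint_of_arrow_comp_eq [HasEqualizers E] {X Z : E} {a b : Subobject X}
    (hab : Codisjoint a b) {u v : X ⟶ Z} (ha : a.arrow ≫ u = a.arrow ≫ v)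
    (hb : b.arrow ≫ u = b.arrow ≫ v) : u = v := by
  have htop : ⊤ ≤ equalizerSubobject u v := hab
    (Subobject.le_of_factors ((equalizerSubobject_factors_iff u v _).2 ha))
    (Subobject.le_of_factors ((equalizerSubobject_factors_iff u v _).2 hb))
  simpa using (equalizerSubobject_factors_iff u v (𝟙 X)).1
    (Subobject.factors_of_le _ htop (Subobject.top_factors _))

lemma comp_comp_eq_self_of_comp_eq {X A B : E} {ν q : A ⟶ B} {s t : B ⟶ A}
    (hqs : q ≫ s = 𝟙 A) (hqt : q ≫ t = 𝟙 A) (hνt : ν ≫ t = 𝟙 A) {x y : X ⟶ A}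
    (h : x ≫ q = y ≫ ν) : x ≫ ν ≫ s = x := by
  have hxy : x = y := by simpa [hqt, hνt] using congrArg (· ≫ t) h
  calc x ≫ ν ≫ s = (y ≫ ν) ≫ s := by rw [hxy, Category.assoc]
    _ = x := by rw [← h, Category.assoc, hqs, Category.comp_id]

lemma arrow_pullback_mk_comp_comp_eq_self [HasPullbacks E] {A B : E} {ν q : A ⟶ B} [Mono ν]
    {s t : B ⟶ A} (hqs : q ≫ s = 𝟙 A) (hqt : q ≫ t = 𝟙 A) (hνt : ν ≫ t = 𝟙 A) :
    ((Subobject.pullback q).obj (Subobject.mk ν)).arrow ≫ ν ≫ s =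
      ((Subobject.pullback q).obj (Subobject.mk ν)).arrow := by
  obtain ⟨y, hy⟩ := (Subobject.mk_factors_iff ν _).1
    ((pullback_factors_iff q (Subobject.mk ν) _).1 (Subobject.factors_self _))
  exact comp_comp_eq_self_of_comp_eq hqs hqt hνt hy.symm

/-- The fragment of the co-category axioms consisting of the pushout `Q2` and the two co-unit laws.
Each co-unit law asserts that the map `[l ∘ i, id]` or `[id, r ∘ i]` out of `Q2` exists; this
amounts to `r ≫ i ≫ l = l` and `l ≫ i ≫ r = r`, respectively. -/
structure CocatStruct.IsCounital (C : CocatStruct E) : Prop where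
  po : IsPushout C.r C.l C.ν1 C.ν2
  counit_left : ∃ s : C.Q2 ⟶ C.Q1, C.ν1 ≫ s = C.i ≫ C.l ∧ C.ν2 ≫ s = 𝟙 C.Q1 ∧ C.q ≫ s = 𝟙 C.Q1
  counit_right : ∃ t : C.Q2 ⟶ C.Q1, C.ν1 ≫ t = 𝟙 C.Q1 ∧ C.ν2 ≫ t = C.i ≫ C.r ∧ C.q ≫ t = 𝟙 C.Q1

lemma CocatStruct.IsCocategory.isCounital {C : CocatStruct E} (h : C.IsCocategory) :
    C.IsCounital where
  po := h.po
  counit_left := by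
    have hw : C.r ≫ C.i ≫ C.l = C.l ≫ 𝟙 C.Q1 := by simp [reassoc_of% h.ri]
    exact ⟨h.po.desc _ _ hw, by simp, by simp, h.counit_left _ (by simp) (by simp)⟩
  counit_right := by
    have hw : C.r ≫ 𝟙 C.Q1 = C.l ≫ C.i ≫ C.r := by simp [reassoc_of% h.li]
    exact ⟨h.po.desc _ _ hw, by simp, by simp, h.counit_right _ (by simp) (by simp)⟩

theorem cocategory_isCopreorder_general [HasPullbacks E] [HasEqualizers E] {C : CocatStruct E}
    (h : C.IsCounital)
    (hq : ∀ {a b : Subobject C.Q2}, Codisjoint a b →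
      Codisjoint ((Subobject.pullback C.q).obj a) ((Subobject.pullback C.q).obj b)) :
    JointlyEpi C.l C.r := by
  obtain ⟨s, hν₁s, hν₂s, hqs⟩ := h.counit_left
  obtain ⟨t, hν₁t, hν₂t, hqt⟩ := h.counit_right
  have : Mono C.ν1 := mono_of_mono_fac hν₁t
  have : Mono C.ν2 := mono_of_mono_fac hν₂s
  have hl : ((Subobject.pullback C.q).obj (.mk C.ν1)).arrow ≫ C.i ≫ C.l =
      ((Subobject.pullback C.q).obj (.mk C.ν1)).arrow :=
    hν₁s ▸ arrow_pullback_mk_comp_comp_eq_self hqs hqt hν₁t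
  have hr : ((Subobject.pullback C.q).obj (.mk C.ν2)).arrow ≫ C.i ≫ C.r =
      ((Subobject.pullback C.q).obj (.mk C.ν2)).arrow :=
    hν₂t ▸ arrow_pullback_mk_comp_comp_eq_self hqt hqs hν₂s
  intro Z u v hlu hru
  refine eq_of_codisjoint_of_arrow_comp_eq (hq (codisjoint_mk_of_isPushout h.po)) ?_ ?_
  · rw [← hl]
    simp only [Category.assoc, hlu]
  · rw [← hr]
    simp only [Category.assoc, hru]

/-- In a coherent category, for every internal co-category the maps `l, r : Q0 ⟶ Q1`
are jointly epimorphic; i.e. every co-category in a coherent category is a co-preorder. -/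
theorem cocategory_isCopreorder [CoherentCategory E]
    (C : CocatStruct E) (h : C.IsCocategory) :
    JointlyEpi C.l C.r :=
  cocategory_isCopreorder_general h.isCounital (CoherentCategory.codisjoint_pullback C.q)
end

section
/- In a coherent category E, let f : A → X and g : B → X be monomorphisms whose union, as subobjects of X, is the maximal subobject (all of X). Then the pullback square of f along g (with projections π1 : P → A, π2 : P → B satisfying f∘π1 = g∘π2) is also a pushout square. -/
/-!
Given `a : A ⟶ Z` and `b : B ⟶ Z` which agree on `P`, let `c` be the union of their graphs in
`X ⨯ Z`. A union is covered by its two parts, so the injectivity of the projection `c ⟶ X` may be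
tested on pairs of elements each lying in one of the graphs: two elements of the same graph agree as
`f` and `g` are monomorphisms, two elements of different graphs come from `P`. As `f` and `g` factor
through the monomorphism `c ⟶ X`, it is an isomorphism, and `c` is the graph of the morphism
`X ⟶ Z` induced by `a` and `b`.
-/

open CategoryTheory CategoryTheory.Limits

universe v u

variable {E : Type u} [Category.{v} E]

section Graph

variable {A X Z : E} [HasBinaryProduct X Z]

theorem comp_inv_fst_snd_of_factors {f : A ⟶ X} {a : A ⟶ Z} {c : Subobject (X ⨯ Z)}
    [IsIso (c.arrow ≫ prod.fst)] (h : c.Factors (prod.lift f a)) :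
    f ≫ inv (c.arrow ≫ prod.fst) ≫ c.arrow ≫ prod.snd = a := by
  have hf : c.factorThru _ h ≫ c.arrow ≫ prod.fst = f := by
    rw [Subobject.factorThru_arrow_assoc, prod.lift_fst]
  calc f ≫ inv (c.arrow ≫ prod.fst) ≫ c.arrow ≫ prod.snd
      = (c.factorThru _ h ≫ c.arrow ≫ prod.fst) ≫
          inv (c.arrow ≫ prod.fst) ≫ c.arrow ≫ prod.snd := by rw [hf]
    _ = c.factorThru _ h ≫ c.arrow ≫ prod.snd := by
          rw [Category.assoc, IsIso.hom_inv_id_assoc]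
    _ = a := by rw [Subobject.factorThru_arrow_assoc, prod.lift_snd]

theorem mk_le_mk_fst_of_mk_lift_le {f : A ⟶ X} [Mono f] {a : A ⟶ Z} {c : Subobject (X ⨯ Z)}
    [Mono (c.arrow ≫ prod.fst)] (h : Subobject.mk (prod.lift f a) ≤ c) :
    Subobject.mk f ≤ Subobject.mk (c.arrow ≫ prod.fst) :=
  Subobject.mk_le_mk_of_comm (Subobject.ofMkLE _ c h) <| by
    rw [← Category.assoc, Subobject.ofMkLE_arrow, prod.lift_fst]

end Graph

/-- The morphism `p` is injective between `i` and `j`: generalized elements of `Y`, one lying in `i`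
and the other in `j`, are equal as soon as `p` identifies them. -/
def InjectiveBetween {A B X Y : E} (p : Y ⟶ X) (i : A ⟶ Y) (j : B ⟶ Y) : Prop :=
  ∀ ⦃W : E⦄ (k : W ⟶ A) (l : W ⟶ B), k ≫ i ≫ p = l ≫ j ≫ p → k ≫ i = l ≫ j

namespace InjectiveBetween

variable {A B X Y : E} {p : Y ⟶ X} {i : A ⟶ Y} {j : B ⟶ Y}

theorem symm (h : InjectiveBetween p i j) : InjectiveBetween p j i :=
  fun _ k l hkl => (h l k hkl.symm).symm

theorem of_mono_comp [Mono (i ≫ p)] : InjectiveBetween p i i :=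
  fun _ k l hkl => by rw [(cancel_mono (i ≫ p)).1 hkl]

theorem mono_comp [Mono i] (h : InjectiveBetween p i i) : Mono (i ≫ p) :=
  ⟨fun k l hkl => (cancel_mono i).1 (h k l hkl)⟩

theorem lift_lift_of_isPullback {P Z : E} [HasBinaryProduct X Z] {f : A ⟶ X} {g : B ⟶ X}
    {π1 : P ⟶ A} {π2 : P ⟶ B} (hpb : IsPullback π1 π2 f g) {a : A ⟶ Z} {b : B ⟶ Z}
    (hab : π1 ≫ a = π2 ≫ b) :
    InjectiveBetween prod.fst (prod.lift f a) (prod.lift g b) := by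
  intro W k l hkl
  have hfg : k ≫ f = l ≫ g := by simpa only [prod.lift_fst] using hkl
  obtain ⟨m, rfl, rfl⟩ := hpb.exists_lift k l hfg
  simp [hpb.w, hab]

end InjectiveBetween

/-- The subobject `c` is the union of `a` and `b`, and remains so after pullback along every
morphism. Pullback along the identity gives the union property of `c` itself. -/
def IsStableUnion [HasPullbacks E] {X : E} (a b c : Subobject X) : Prop :=
  ∀ ⦃Y : E⦄ (f : Y ⟶ X), IsLUB {(Subobject.pullback f).obj a, (Subobject.pullback f).obj b}
    ((Subobject.pullback f).obj c)

namespace IsStableUnion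

variable [HasPullbacks E]

theorem isLUB {X : E} {a b c : Subobject X} (h : IsStableUnion a b c) : IsLUB {a, b} c := by
  simpa only [Subobject.pullback_id] using h (𝟙 X)

theorem left_le {X : E} {a b c : Subobject X} (h : IsStableUnion a b c) : a ≤ c :=
  h.isLUB.1 (Set.mem_insert a {b})

theorem right_le {X : E} {a b c : Subobject X} (h : IsStableUnion a b c) : b ≤ c :=
  h.isLUB.1 (Set.mem_insert_of_mem a rfl)

end IsStableUnion

theorem pullback_mk_le_equalizerSubobject [HasPullbacks E] {A T Y Z : E} {i : A ⟶ Y} [Mono i]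
    {s : T ⟶ Y} {u v : T ⟶ Z} [HasEqualizer u v]
    (h : ∀ ⦃W : E⦄ (w : W ⟶ T) (k : W ⟶ A), k ≫ i = w ≫ s → w ≫ u = w ≫ v) :
    (Subobject.pullback s).obj (Subobject.mk i) ≤ equalizerSubobject u v := by
  set a := (Subobject.pullback s).obj (Subobject.mk i)
  obtain ⟨k, hk⟩ : ∃ k, k ≫ i = a.arrow ≫ s :=
    (Subobject.mk_factors_iff i _).1 ((Limits.pullback_factors_iff s _ _).1 a.factors_self)
  exact Subobject.le_of_comm _
    (Subobject.factorThru_arrow _ _ (equalizerSubobject_factors u v _ (h a.arrow k hk)))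

namespace IsStableUnion

variable [HasPullbacks E] [HasEqualizers E] {A B Y : E} {i : A ⟶ Y} {j : B ⟶ Y} [Mono i] [Mono j]
  {c : Subobject Y}

theorem hom_ext (hc : IsStableUnion (Subobject.mk i) (Subobject.mk j) c) {T Z : E} {s : T ⟶ Y}
    (hs : c.Factors s) {u v : T ⟶ Z}
    (hi : ∀ ⦃W : E⦄ (w : W ⟶ T) (k : W ⟶ A), k ≫ i = w ≫ s → w ≫ u = w ≫ v)
    (hj : ∀ ⦃W : E⦄ (w : W ⟶ T) (k : W ⟶ B), k ≫ j = w ≫ s → w ≫ u = w ≫ v) :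
    u = v := by
  have hle : (Subobject.pullback s).obj c ≤ equalizerSubobject u v := by
    refine (hc s).2 ?_
    rintro _ (rfl | rfl)
    exacts [pullback_mk_le_equalizerSubobject hi, pullback_mk_le_equalizerSubobject hj]
  have hid : ((Subobject.pullback s).obj c).Factors (𝟙 T) :=
    (Limits.pullback_factors_iff s c (𝟙 T)).2 (by rwa [Category.id_comp])
  simpa only [Category.id_comp] using
    (equalizerSubobject_factors_iff u v (𝟙 T)).1 (Subobject.factors_of_le _ hle hid)

theorem injectiveBetween (hc : IsStableUnion (Subobject.mk i) (Subobject.mk j) c) {T X : E}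
    {p : Y ⟶ X} {x : T ⟶ Y} (hi : InjectiveBetween p i x) (hj : InjectiveBetween p j x) :
    InjectiveBetween p c.arrow x := by
  intro W k l hkl
  refine hc.hom_ext (Subobject.factors_comp_arrow k) (fun V w m hm => ?_) (fun V w m hm => ?_)
  · rw [← hm, ← Category.assoc]
    exact hi m (w ≫ l) (by simp only [reassoc_of% hm, hkl, Category.assoc])
  · rw [← hm, ← Category.assoc]
    exact hj m (w ≫ l) (by simp only [reassoc_of% hm, hkl, Category.assoc])

theorem mono_arrow_comp (hc : IsStableUnion (Subobject.mk i) (Subobject.mk j) c) {X : E}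
    {p : Y ⟶ X} [Mono (i ≫ p)] [Mono (j ≫ p)] (hij : InjectiveBetween p i j) :
    Mono (c.arrow ≫ p) :=
  have hi : InjectiveBetween p c.arrow i := hc.injectiveBetween .of_mono_comp hij.symm
  have hj : InjectiveBetween p c.arrow j := hc.injectiveBetween hij .of_mono_comp
  (hc.injectiveBetween hi.symm hj.symm).mono_comp

theorem hom_ext_of_top (hc : IsStableUnion (Subobject.mk i) (Subobject.mk j) ⊤) {Z : E}
    {u v : Y ⟶ Z} (hi : i ≫ u = i ≫ v) (hj : j ≫ u = j ≫ v) : u = v := by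
  refine hc.hom_ext (Subobject.top_factors (𝟙 Y)) (fun W w k hk => ?_) (fun W w k hk => ?_)
  · obtain rfl : k ≫ i = w := by rw [hk, Category.comp_id]
    simp only [Category.assoc, hi]
  · obtain rfl : k ≫ j = w := by rw [hk, Category.comp_id]
    simp only [Category.assoc, hj]

end IsStableUnion

/-- A category with pullbacks in which any two subobjects of an object have a union that is stable
under pullback. -/
class HasStableUnions (E : Type u) [Category.{v} E] [HasPullbacks E] : Prop where
  exists_isStableUnion : ∀ {X : E} (a b : Subobject X), ∃ c, IsStableUnion a b c

instance CoherentCategory.hasStableUnions [CoherentCategory E] : HasStableUnions E where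
  exists_isStableUnion a b := by
    obtain ⟨c, hac, hbc, hc⟩ := CoherentCategory.exists_union a b
    refine ⟨c, fun Y f => ⟨?_, fun d hd => ?_⟩⟩
    · rintro _ (rfl | rfl)
      exacts [(Subobject.pullback f).monotone hac, (Subobject.pullback f).monotone hbc]
    · exact CoherentCategory.union_pullback f a b c hac hbc hc d (hd (by simp)) (hd (by simp))

theorem isStableUnion_top_of_union_eq_top [HasPullbacks E] [HasStableUnions E] {X : E}
    {a b : Subobject X} (hunion : ∀ d : Subobject X, a ≤ d → b ≤ d → d = ⊤) :
    IsStableUnion a b ⊤ := by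
  obtain ⟨c, hc⟩ := HasStableUnions.exists_isStableUnion a b
  rwa [← hunion c hc.left_le hc.right_le]

section Pushout

variable [HasFiniteLimits E] [HasStableUnions E] {A B X P : E} {f : A ⟶ X} {g : B ⟶ X}
  [Mono f] [Mono g] {π1 : P ⟶ A} {π2 : P ⟶ B}

theorem exists_desc_of_union_eq_top (hpb : IsPullback π1 π2 f g)
    (hunion : ∀ d : Subobject X, Subobject.mk f ≤ d → Subobject.mk g ≤ d → d = ⊤)
    {Z : E} {a : A ⟶ Z} {b : B ⟶ Z} (hab : π1 ≫ a = π2 ≫ b) :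
    ∃ d : X ⟶ Z, f ≫ d = a ∧ g ≫ d = b := by
  obtain ⟨c, hc⟩ := HasStableUnions.exists_isStableUnion
    (Subobject.mk (prod.lift f a)) (Subobject.mk (prod.lift g b))
  have : Mono (prod.lift f a ≫ prod.fst) := by rwa [prod.lift_fst]
  have : Mono (prod.lift g b ≫ prod.fst) := by rwa [prod.lift_fst]
  have : Mono (c.arrow ≫ prod.fst) := hc.mono_arrow_comp (.lift_lift_of_isPullback hpb hab)
  have : IsIso (c.arrow ≫ prod.fst) := (Subobject.isIso_iff_mk_eq_top _).2 <|
    hunion _ (mk_le_mk_fst_of_mk_lift_le hc.left_le) (mk_le_mk_fst_of_mk_lift_le hc.right_le)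
  exact ⟨inv (c.arrow ≫ prod.fst) ≫ c.arrow ≫ prod.snd,
    comp_inv_fst_snd_of_factors
      (Subobject.factors_of_le _ hc.left_le (Subobject.mk_factors_self _)),
    comp_inv_fst_snd_of_factors
      (Subobject.factors_of_le _ hc.right_le (Subobject.mk_factors_self _))⟩

theorem isPushout_of_union_eq_top_general (hpb : IsPullback π1 π2 f g)
    (hunion : ∀ d : Subobject X, Subobject.mk f ≤ d → Subobject.mk g ≤ d → d = ⊤) :
    IsPushout π1 π2 f g := by
  choose desc f_desc g_desc using fun q : PushoutCocone π1 π2 =>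
    exists_desc_of_union_eq_top hpb hunion q.condition
  exact ⟨⟨hpb.w⟩, ⟨PushoutCocone.IsColimit.mk hpb.w desc f_desc g_desc fun q m hf hg =>
    (isStableUnion_top_of_union_eq_top hunion).hom_ext_of_top
      (hf.trans (f_desc q).symm) (hg.trans (g_desc q).symm)⟩⟩

end Pushout

/-- In a coherent category, if two monomorphisms `f : A ⟶ X`, `g : B ⟶ X` have union the
maximal subobject of `X`, then their pullback square is also a pushout square. -/
theorem isPushout_of_union_eq_top [CoherentCategory E]
    {A B X P : E} (f : A ⟶ X) (g : B ⟶ X) [Mono f] [Mono g]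
    (π1 : P ⟶ A) (π2 : P ⟶ B) (hpb : IsPullback π1 π2 f g)
    (hunion : ∀ d : Subobject X, Subobject.mk f ≤ d → Subobject.mk g ≤ d → d = ⊤) :
    IsPushout π1 π2 f g :=
  isPushout_of_union_eq_top_general hpb hunion
end
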